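/- Let η : ℝ → ℝ be smooth and compactly supported. For every s ∈ ℝ and b ∈ ℝ there exists C > 0 (depending on η, s, b) such that for every τ ∈ (0,1] and every sequence (u_n)_{n∈ℤ} of functions in H^s(𝕋) with only finitely many nonzero terms, ‖(η(nτ) u_n)_{n∈ℤ}‖_{X^{s,b}_τ} ≤ C ‖(u_n)‖_{X^{s,b}_τ}. -/

import Mathlib

noncomputable section

open MeasureTheory Complex Filter Topology AddCircle
open scoped ENNReal

abbrev Torus := AddCircle (2 * Real.pi)

instance : Fact (0 < 2 * Real.pi) := ⟨by positivity⟩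

/-- Japanese bracket `⟨x⟩ = (1+|x|²)^{1/2}`. -/
def jbr (x : ℝ) : ℝ := Real.sqrt (1 + x ^ 2)

/-- The Sobolev `H^s` norm on the torus, via Fourier coefficients. -/
def hsNorm (s : ℝ) (f : Torus → ℂ) : ℝ :=
  Real.sqrt (∑' k : ℤ, jbr k ^ (2 * s) * ‖fourierCoeff f k‖ ^ 2)

/-- Membership in `H^s(𝕋)` (as a function): square integrable with finite `H^s` norm. -/
def InHs (s : ℝ) (f : Torus → ℂ) : Prop :=
  MemLp f 2 haarAddCircle ∧ Summable fun k : ℤ => jbr k ^ (2 * s) * ‖fourierCoeff f k‖ ^ 2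

/-- The frequency cutoff `Π_τ`, keeping the Fourier modes `|k| ≤ τ^{-1/2}`. -/
def projC (τ : ℝ) (f : Torus → ℂ) : Torus → ℂ := fun x =>
  ∑' k : ℤ, if |(k : ℝ)| ≤ τ ^ (-(1 : ℝ) / 2) then fourierCoeff f k * fourier k x else 0

/-- The free Schrödinger group `e^{it∂_x²}`, given by the Fourier multiplier `e^{-itk²}`. -/
def schrod (t : ℝ) (f : Torus → ℂ) : Torus → ℂ := fun x =>
  ∑' k : ℤ, Complex.exp (-Complex.I * t * (k : ℂ) ^ 2) * fourierCoeff f k * fourier k x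

/-- Continuity on `I` with values in `L²(𝕋)`. -/
def ContL2On (I : Set ℝ) (u : ℝ → Torus → ℂ) : Prop :=
  (∀ t ∈ I, MemLp (u t) 2 haarAddCircle) ∧
  ∀ t ∈ I, Tendsto (fun t' => eLpNorm (u t' - u t) 2 haarAddCircle) (nhdsWithin t I) (nhds 0)

/-- Continuity on `I` with values in `H^s(𝕋)`. -/
def ContHsOn (s : ℝ) (I : Set ℝ) (u : ℝ → Torus → ℂ) : Prop :=
  (∀ t ∈ I, InHs s (u t)) ∧
  ∀ t ∈ I, Tendsto (fun t' => hsNorm s (u t' - u t)) (nhdsWithin t I) (nhds 0)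

/-- The cubic nonlinearity `|f|² f` (pointwise). -/
def cubic (f : Torus → ℂ) : Torus → ℂ := fun x => (‖f x‖ : ℂ) ^ 2 * f x

/-- The filtered cubic nonlinearity `Π_τ(|Π_τ f|² Π_τ f)`. -/
def projCubic (τ : ℝ) (f : Torus → ℂ) : Torus → ℂ := projC τ (cubic (projC τ f))

/-- `v` is the (global-in-time) mild solution of the projected equation
`i∂_t v = -∂_x² v - μ Π_τ(|Π_τ v|² Π_τ v)`, `v(0) = Π_τ u₀`. -/
def IsProjSolution (μ τ : ℝ) (u₀ : Torus → ℂ) (v : ℝ → Torus → ℂ) : Prop :=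
  ContL2On Set.univ v ∧
  ∀ t : ℝ, ∀ x : Torus,
    v t x = schrod t (projC τ u₀) x
      + Complex.I * μ * ∫ s in (0 : ℝ)..t, schrod (t - s) (projCubic τ (v s)) x

/-- The cubic NLS `i∂_t u = -∂_x² u - μ |u|² u` holds in the sense of space-time
distributions on `(0,T) × 𝕋` (tested against `ψ(t) e^{-ikx}`). -/
def DistribSolOn (μ T : ℝ) (u : ℝ → Torus → ℂ) : Prop :=
  ∀ k : ℤ, ∀ ψ : ℝ → ℂ, ContDiff ℝ (⊤ : ℕ∞) ψ → tsupport ψ ⊆ Set.Ioo 0 T →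
    -Complex.I * ∫ t : ℝ, deriv ψ t * fourierCoeff (u t) k
      = (k : ℂ) ^ 2 * ∫ t : ℝ, ψ t * fourierCoeff (u t) k
        - (μ : ℂ) * ∫ t : ℝ, ψ t * fourierCoeff (cubic (u t)) k

/-- `u ∈ L⁴((0,T) × 𝕋)`. -/
def SpaceTimeL4 (T : ℝ) (u : ℝ → Torus → ℂ) : Prop :=
  MemLp (fun p : ℝ × Torus => u p.1 p.2) 4
    ((volume.restrict (Set.Ioo 0 T)).prod haarAddCircle)

/-- Space-time Fourier transform `ṽ(σ,k)` of `v : ℝ × 𝕋 → ℂ`. -/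
def stFT (v : ℝ → Torus → ℂ) (σ : ℝ) (k : ℤ) : ℂ :=
  ∫ t : ℝ, Complex.exp (-Complex.I * σ * t) * fourierCoeff (v t) k

/-- The (continuous) Bourgain `X^{s,b}` norm, valued in `ℝ≥0∞`. -/
def XcNorm (s b : ℝ) (v : ℝ → Torus → ℂ) : ℝ≥0∞ :=
  (∫⁻ σ : ℝ, ∑' k : ℤ,
      ENNReal.ofReal ((1 + |(k : ℝ)|) ^ (2 * s) * (1 + |σ + (k : ℝ) ^ 2|) ^ (2 * b)
        * ‖stFT v σ k‖ ^ 2)) ^ (1 / 2 : ℝ)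

/-- The restriction norm `‖u‖_{X^{s,b}(T)}` is bounded by `M`: some extension of `u`
from `(0,T)` has `X^{s,b}` norm at most `M`. -/
def XresBounded (s b T : ℝ) (u : ℝ → Torus → ℂ) (M : ℝ≥0∞) : Prop :=
  ∃ v : ℝ → Torus → ℂ, (∀ t ∈ Set.Ioo 0 T, v t = u t) ∧ XcNorm s b v ≤ M

/-- `u` is a Bourgain-class solution of cubic NLS on `[0,T]` with datum `u₀`. -/
def IsNLSSolution (μ T : ℝ) (u₀ : Torus → ℂ) (u : ℝ → Torus → ℂ) : Prop :=
  ContL2On (Set.Icc 0 T) u ∧ SpaceTimeL4 T u ∧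
  (∃ b ∈ Set.Ioo (1 / 2 : ℝ) (5 / 8 : ℝ), ∃ v : ℝ → Torus → ℂ,
      (∀ t ∈ Set.Ioo 0 T, v t = u t) ∧ XcNorm 0 b v < ⊤) ∧
  u 0 = u₀ ∧ DistribSolOn μ T u

/-- One step of the pointwise nonlinear flow `e^{iμτ|Π_τ f|²} Π_τ f`. -/
def lieFlow (μ τ : ℝ) (f : Torus → ℂ) : Torus → ℂ := fun x =>
  Complex.exp (Complex.I * μ * τ * (‖projC τ f x‖ : ℂ) ^ 2) * projC τ f x

/-- The filtered Lie splitting scheme `u⁰ = Π_τ u₀`,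
`u^{n+1} = e^{iτ∂_x²} Π_τ (e^{iμτ|Π_τ uⁿ|²} Π_τ uⁿ)`. -/
def lieScheme (μ τ : ℝ) (u₀ : Torus → ℂ) : ℕ → Torus → ℂ
  | 0 => projC τ u₀
  | n + 1 => schrod τ (projC τ (lieFlow μ τ (lieScheme μ τ u₀ n)))

/-- `d_τ(σ) = (e^{iτσ}-1)/τ`. -/
def dtau (τ σ : ℝ) : ℂ := (Complex.exp (Complex.I * τ * σ) - 1) / τ

/-- The discrete Bourgain `X^{s,b}_τ` norm of a sequence of functions on the torus. -/
def XdNorm (τ s b : ℝ) (u : ℤ → Torus → ℂ) : ℝ :=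
  Real.sqrt (∫ σ in Set.Ioc (-(Real.pi / τ)) (Real.pi / τ),
    ∑' k : ℤ, jbr k ^ (2 * s) * jbr ‖dtau τ (σ - (k : ℝ) ^ 2)‖ ^ (2 * b) *
      ‖(τ : ℂ) * ∑' m : ℤ, fourierCoeff (u m) k * Complex.exp (Complex.I * m * τ * σ)‖ ^ 2)

/-- The discrete space-time Lebesgue norm `‖(u_n)‖_{ℓ^p_τ L^q}`. -/
def lpLqNorm (τ p q : ℝ) (u : ℤ → Torus → ℂ) : ℝ :=
  (τ * ∑' n : ℤ, (eLpNorm (u n) (ENNReal.ofReal q) haarAddCircle).toReal ^ p) ^ (1 / p)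

lemma jbr_one_le (x : ℝ) : 1 ≤ jbr x := by
  unfold jbr
  rw [Real.one_le_sqrt]
  nlinarith [sq_nonneg x]

lemma jbr_peetre (x y l : ℝ) (h : |x - y| ≤ l) : jbr x ≤ (1 + l) * jbr y := by
  have hl : 0 ≤ l := (abs_nonneg _).trans h
  unfold jbr
  rw [Real.sqrt_le_iff]
  refine ⟨by positivity, ?_⟩
  rw [mul_pow, Real.sq_sqrt (by positivity)]
  have h1 : |x| ≤ |y| + l := by
    have := abs_sub_abs_le_abs_sub x y
    linarith
  have h2 : x ^ 2 ≤ (|y| + l) ^ 2 := by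
    rw [← sq_abs x]
    exact pow_le_pow_left₀ (abs_nonneg _) h1 2
  have h3 : |y| ^ 2 = y ^ 2 := sq_abs y
  nlinarith [mul_nonneg hl (sq_nonneg (|y| - 1)), mul_nonneg hl hl, sq_nonneg (l * y), mul_nonneg hl (abs_nonneg y)]

lemma jbr_rpow_peetre (x y l p : ℝ) (N : ℕ) (hN : |p| ≤ N) (h : |x - y| ≤ l) :
    jbr x ^ p ≤ (1 + l) ^ N * jbr y ^ p := by
  have hl : 0 ≤ l := (abs_nonneg _).trans h
  have hx := jbr_one_le x
  have hy := jbr_one_le y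
  have key : ∀ q : ℝ, 0 ≤ q → q ≤ N → (1 + l) ^ q ≤ (1 + l) ^ N := fun q _ hq => by
    rw [← Real.rpow_natCast]
    exact Real.rpow_le_rpow_of_exponent_le (by linarith) hq
  rcases le_total 0 p with hp | hp
  · calc jbr x ^ p ≤ ((1 + l) * jbr y) ^ p :=
          Real.rpow_le_rpow (by linarith) (jbr_peetre x y l h) hp
      _ = (1 + l) ^ p * jbr y ^ p := Real.mul_rpow (by linarith) (by linarith)
      _ ≤ _ := by
        gcongr
        exact key p hp ((le_abs_self p).trans hN)
  · have h1 : jbr y ^ (-p) ≤ (1 + l) ^ (-p) * jbr x ^ (-p) := by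
      rw [← Real.mul_rpow (by linarith) (by linarith)]
      exact Real.rpow_le_rpow (by linarith)
        (jbr_peetre y x l (by rwa [abs_sub_comm])) (by linarith)
    have h2 := key (-p) (by linarith) ((neg_le_abs p).trans hN)
    have h3 : jbr y ^ (-p) ≤ (1 + l) ^ N * jbr x ^ (-p) :=
      h1.trans (by gcongr)
    rw [Real.rpow_neg (by linarith), Real.rpow_neg (by linarith)] at h3
    have hxp : 0 < jbr x ^ p := Real.rpow_pos_of_pos (by linarith) _
    have hyp : 0 < jbr y ^ p := Real.rpow_pos_of_pos (by linarith) _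
    rw [← div_eq_mul_inv, inv_le_iff_one_le_mul₀ hyp, div_mul_eq_mul_div, le_div_iff₀ hxp] at h3
    linarith

lemma dtau_diff (τ : ℝ) (hτ : 0 < τ) (σ l : ℝ) :
    |‖dtau τ σ‖ - ‖dtau τ (σ + l)‖| ≤ |l| := by
  refine (abs_norm_sub_norm_le _ _).trans ?_
  have : dtau τ σ - dtau τ (σ + l) =
      -(Complex.exp (Complex.I * ((τ * σ : ℝ) : ℂ)) *
        (Complex.exp (Complex.I * ((τ * l : ℝ) : ℂ)) - 1)) / τ := by
    unfold dtau
    have e : Complex.I * (τ : ℂ) * ((σ + l : ℝ) : ℂ) =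
        Complex.I * ((τ * σ : ℝ) : ℂ) + Complex.I * ((τ * l : ℝ) : ℂ) := by
      push_cast; ring
    rw [e, Complex.exp_add]
    push_cast
    ring_nf
  rw [this, norm_div, norm_neg, norm_mul, mul_comm Complex.I, Complex.norm_exp_ofReal_mul_I, one_mul]
  rw [Complex.norm_real, Real.norm_of_nonneg hτ.le, div_le_iff₀ hτ]
  refine Real.norm_exp_I_mul_ofReal_sub_one_le.trans ?_
  rw [Real.norm_eq_abs, abs_mul, abs_of_pos hτ, mul_comm]

lemma dtau_zero (τ : ℝ) : dtau τ 0 = 0 := by simp [dtau]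

lemma dtau_periodic (τ : ℝ) (hτ : 0 < τ) (σ : ℝ) :
    dtau τ (σ + 2 * Real.pi / τ) = dtau τ σ := by
  unfold dtau
  have : Complex.I * (τ : ℂ) * ((σ + 2 * Real.pi / τ : ℝ) : ℂ) =
      Complex.I * τ * σ + 2 * Real.pi * Complex.I := by
    have : (τ : ℂ) ≠ 0 := by exact_mod_cast hτ.ne'
    push_cast
    field_simp
  rw [this, Complex.exp_periodic]

lemma dtau_bound (τ : ℝ) (hτ : 0 < τ) (σ : ℝ) : ‖dtau τ σ‖ ≤ 2 / τ := by
  unfold dtau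
  rw [norm_div, Complex.norm_real, Real.norm_of_nonneg hτ.le]
  gcongr
  refine (norm_sub_le _ _).trans ?_
  have : Complex.I * (τ : ℂ) * (σ : ℂ) = ((τ * σ : ℝ) : ℂ) * Complex.I := by push_cast; ring
  rw [this, Complex.norm_exp_ofReal_mul_I]
  norm_num

lemma jbr_continuous : Continuous jbr := by
  unfold jbr
  fun_prop

lemma dtau_continuous (τ : ℝ) : Continuous (dtau τ) := by
  unfold dtau
  fun_prop

lemma lintegral_cs (g f : ℝ → ℝ≥0∞) (hg : Measurable g) (hf : Measurable f) :
    (∫⁻ x, g x * f x) ^ 2 ≤ (∫⁻ x, g x) * ∫⁻ x, g x * f x ^ 2 := by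
  have h := ENNReal.lintegral_mul_le_Lp_mul_Lq (volume : Measure ℝ) Real.HolderConjugate.two_two
    (f := fun x => g x ^ (1 / 2 : ℝ)) (g := fun x => g x ^ (1 / 2 : ℝ) * f x)
    (by fun_prop) (by fun_prop)
  have e0 : ∀ x : ℝ≥0∞, x ^ (1 / 2 : ℝ) * x ^ (1 / 2 : ℝ) = x := fun x => by
    rw [← ENNReal.rpow_add_of_nonneg _ _ (by norm_num) (by norm_num)]; norm_num
  have e1 : ∀ x : ℝ≥0∞, (x ^ (1 / 2 : ℝ)) ^ (2 : ℝ) = x := fun x => by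
    rw [← ENNReal.rpow_mul]; norm_num
  simp only [Pi.mul_apply, ← mul_assoc, e0, e1, ENNReal.mul_rpow_of_nonneg _ _ zero_le_two] at h
  have h2 := pow_le_pow_left' h 2
  have e2 : ∀ x : ℝ≥0∞, (x ^ (1 / 2 : ℝ)) ^ 2 = x := fun x => by rw [pow_two, e0]
  rw [mul_pow, e2, e2] at h2
  simpa only [ENNReal.rpow_two] using h2

lemma shift_periodic (h : ℝ → ℝ) (hc : Continuous h) (h0 : ∀ x, 0 ≤ h x) (a T l : ℝ) (hT : 0 < T)
    (hp : ∀ x, h (x + T) = h x) :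
    ∫⁻ x in Set.Ioc a (a + T), ENNReal.ofReal (h (x + l)) =
      ∫⁻ x in Set.Ioc a (a + T), ENNReal.ofReal (h x) := by
  have hc' : Continuous fun x => h (x + l) := by fun_prop
  rw [← ofReal_integral_eq_lintegral_ofReal (hc'.integrableOn_Ioc) (ae_of_all _ fun x => h0 _),
    ← ofReal_integral_eq_lintegral_ofReal (hc.integrableOn_Ioc) (ae_of_all _ fun x => h0 _)]
  rw [← intervalIntegral.integral_of_le (by linarith), ← intervalIntegral.integral_of_le (by linarith)]
  rw [intervalIntegral.integral_comp_add_right (fun x => h x) l]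
  have hp' : Function.Periodic h T := hp
  rw [show a + T + l = (a + l) + T by ring, hp'.intervalIntegral_add_eq (a + l) a]

lemma core (g F : ℝ → ℂ) (hg : Continuous g) (hF : Continuous F) (W Q : ℝ → ℝ)
    (hW : Continuous W) (hW0 : ∀ x, 0 ≤ W x) (hQ : Continuous Q) (hQ0 : ∀ x, 0 ≤ Q x)
    (hWQ : ∀ σ ξ, W σ ≤ Q ξ * W (σ + 2 * Real.pi * ξ)) (a T : ℝ) (hT : 0 < T)
    (hWp : ∀ x, W (x + T) = W x) (hFp : ∀ x, F (x + T) = F x) :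
    ∫⁻ σ in Set.Ioc a (a + T),
        ENNReal.ofReal (W σ * ‖∫ ξ, g ξ * F (σ + 2 * Real.pi * ξ)‖ ^ 2) ≤
      ((∫⁻ ξ, ‖g ξ‖ₑ) * (∫⁻ ξ, ‖g ξ‖ₑ * ENNReal.ofReal (Q ξ))) *
        ∫⁻ σ in Set.Ioc a (a + T), ENNReal.ofReal (W σ * ‖F σ‖ ^ 2) := by
  have mg := hg.measurable
  have mF := hF.measurable
  have mW := hW.measurable
  have mQ := hQ.measurable
  have hpt : ∀ σ, ENNReal.ofReal (W σ * ‖∫ ξ, g ξ * F (σ + 2 * Real.pi * ξ)‖ ^ 2) ≤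
      (∫⁻ ξ, ‖g ξ‖ₑ) * ∫⁻ ξ, ‖g ξ‖ₑ * ENNReal.ofReal (Q ξ) *
        ENNReal.ofReal (W (σ + 2 * Real.pi * ξ) * ‖F (σ + 2 * Real.pi * ξ)‖ ^ 2) := by
    intro σ
    have h1 : ‖∫ ξ, g ξ * F (σ + 2 * Real.pi * ξ)‖ₑ ≤
        ∫⁻ ξ, ‖g ξ‖ₑ * ‖F (σ + 2 * Real.pi * ξ)‖ₑ := by
      refine (enorm_integral_le_lintegral_enorm _).trans ?_
      simp only [enorm_mul, le_refl]
    have h2 := lintegral_cs (fun ξ => ‖g ξ‖ₑ) (fun ξ => ‖F (σ + 2 * Real.pi * ξ)‖ₑ)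
      (by fun_prop) (by fun_prop)
    rw [ENNReal.ofReal_mul (hW0 σ), ENNReal.ofReal_pow (norm_nonneg _), ofReal_norm]
    calc ENNReal.ofReal (W σ) * ‖∫ ξ, g ξ * F (σ + 2 * Real.pi * ξ)‖ₑ ^ 2
        ≤ ENNReal.ofReal (W σ) * ((∫⁻ ξ, ‖g ξ‖ₑ) *
            ∫⁻ ξ, ‖g ξ‖ₑ * ‖F (σ + 2 * Real.pi * ξ)‖ₑ ^ 2) := by
          gcongr
          exact (pow_le_pow_left' h1 2).trans h2
      _ = (∫⁻ ξ, ‖g ξ‖ₑ) *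
            ∫⁻ ξ, ENNReal.ofReal (W σ) * (‖g ξ‖ₑ * ‖F (σ + 2 * Real.pi * ξ)‖ₑ ^ 2) := by
          rw [lintegral_const_mul _ (by fun_prop)]
          ring
      _ ≤ _ := by
          refine mul_le_mul_right (lintegral_mono fun ξ => ?_) _
          beta_reduce
          rw [ENNReal.ofReal_mul (hW0 _), ENNReal.ofReal_pow (norm_nonneg _), ofReal_norm]
          calc ENNReal.ofReal (W σ) * (‖g ξ‖ₑ * ‖F (σ + 2 * Real.pi * ξ)‖ₑ ^ 2)
              ≤ ENNReal.ofReal (Q ξ * W (σ + 2 * Real.pi * ξ)) *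
                (‖g ξ‖ₑ * ‖F (σ + 2 * Real.pi * ξ)‖ₑ ^ 2) := by
                gcongr
                exact hWQ σ ξ
            _ = _ := by
                rw [ENNReal.ofReal_mul (hQ0 _)]
                ring
  calc _ ≤ ∫⁻ σ in Set.Ioc a (a + T), (∫⁻ ξ, ‖g ξ‖ₑ) * ∫⁻ ξ, ‖g ξ‖ₑ * ENNReal.ofReal (Q ξ) *
        ENNReal.ofReal (W (σ + 2 * Real.pi * ξ) * ‖F (σ + 2 * Real.pi * ξ)‖ ^ 2) :=
        lintegral_mono hpt
    _ = (∫⁻ ξ, ‖g ξ‖ₑ) * ∫⁻ σ in Set.Ioc a (a + T), ∫⁻ ξ, ‖g ξ‖ₑ * ENNReal.ofReal (Q ξ) *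
        ENNReal.ofReal (W (σ + 2 * Real.pi * ξ) * ‖F (σ + 2 * Real.pi * ξ)‖ ^ 2) := by
        rw [lintegral_const_mul]
        apply Measurable.lintegral_prod_right'
          (f := fun p : ℝ × ℝ => ‖g p.2‖ₑ * ENNReal.ofReal (Q p.2) *
        ENNReal.ofReal (W (p.1 + 2 * Real.pi * p.2) * ‖F (p.1 + 2 * Real.pi * p.2)‖ ^ 2))
        fun_prop
    _ = (∫⁻ ξ, ‖g ξ‖ₑ) * ∫⁻ ξ, ∫⁻ σ in Set.Ioc a (a + T), ‖g ξ‖ₑ * ENNReal.ofReal (Q ξ) *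
        ENNReal.ofReal (W (σ + 2 * Real.pi * ξ) * ‖F (σ + 2 * Real.pi * ξ)‖ ^ 2) := by
        rw [lintegral_lintegral_swap]
        apply Measurable.aemeasurable
        unfold Function.uncurry
        fun_prop
    _ = (∫⁻ ξ, ‖g ξ‖ₑ) * ∫⁻ ξ, ‖g ξ‖ₑ * ENNReal.ofReal (Q ξ) *
        ∫⁻ σ in Set.Ioc a (a + T), ENNReal.ofReal (W σ * ‖F σ‖ ^ 2) := by
        congr 1
        refine lintegral_congr fun ξ => ?_
        rw [lintegral_const_mul _ (by fun_prop)]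
        rw [shift_periodic (fun x => W x * ‖F x‖ ^ 2) (by fun_prop)
          (fun x => mul_nonneg (hW0 x) (by positivity)) a T _ hT (fun x => by rw [hWp, hFp])]
    _ = _ := by
        rw [lintegral_mul_const _ (by fun_prop), mul_assoc]

lemma eta_fourier (η : ℝ → ℝ) (hη : ContDiff ℝ (⊤ : ℕ∞) η) (hηc : HasCompactSupport η) (N : ℕ) :
    ∃ g : ℝ → ℂ, Continuous g ∧ Integrable g ∧
      (∀ t : ℝ, (η t : ℂ) = ∫ ξ, g ξ * Complex.exp (Complex.I * (2 * Real.pi * ξ * t : ℝ))) ∧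
      (∫⁻ ξ, ‖g ξ‖ₑ * ENNReal.ofReal ((1 + |2 * Real.pi * ξ|) ^ N)) < ⊤ := by
  have hc : HasCompactSupport fun t => (η t : ℂ) := hηc.comp_left (g := Complex.ofReal) rfl
  have hs : ContDiff ℝ (⊤ : ℕ∞) fun t => (η t : ℂ) := Complex.ofRealCLM.contDiff.comp hη
  let f : SchwartzMap ℝ ℂ := hc.toSchwartzMap hs
  have hf : (f : ℝ → ℂ) = fun t => (η t : ℂ) := rfl
  let G : SchwartzMap ℝ ℂ := FourierTransform.fourier f
  have hG : (G : ℝ → ℂ) = FourierTransform.fourier (f : ℝ → ℂ) := SchwartzMap.fourier_coe f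
  refine ⟨G, G.continuous, G.integrable, ?_, ?_⟩
  · intro t
    have h := f.continuous.fourierInv_fourier_eq f.integrable (hG ▸ G.integrable)
    rw [← hG] at h
    have h2 := congrFun h t
    rw [Real.fourierInv_eq', hf] at h2
    beta_reduce at h2
    rw [← h2]
    refine integral_congr_ae (ae_of_all _ fun ξ => ?_)
    simp only [smul_eq_mul]
    rw [mul_comm]
    congr 2
    rw [mul_comm]
    congr 2
    simp
    ring
  · have h0 := G.integrable_pow_mul volume 0
    have hN := G.integrable_pow_mul volume N
    have hi : Integrable fun ξ : ℝ => 2 ^ (N - 1) * (‖ξ‖ ^ 0 * ‖G ξ‖) +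
        2 ^ (N - 1) * (2 * Real.pi) ^ N * (‖ξ‖ ^ N * ‖G ξ‖) :=
      (h0.const_mul _).add (hN.const_mul _)
    refine lt_of_le_of_lt ?_ hi.lintegral_lt_top
    refine lintegral_mono fun ξ => ?_
    rw [← ofReal_norm, ← ENNReal.ofReal_mul (norm_nonneg _)]
    apply ENNReal.ofReal_le_ofReal
    have := add_pow_le zero_le_one (abs_nonneg (2 * Real.pi * ξ)) N
    calc ‖G ξ‖ * (1 + |2 * Real.pi * ξ|) ^ N
        ≤ ‖G ξ‖ * (2 ^ (N - 1) * (1 ^ N + |2 * Real.pi * ξ| ^ N)) := by gcongr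
      _ = _ := by
        rw [abs_mul, abs_of_pos (by positivity : 0 < 2 * Real.pi), Real.norm_eq_abs, mul_pow]
        ring

lemma conv_identity (η : ℝ → ℝ) (g : ℝ → ℂ) (hgi : Integrable g)
    (hg : ∀ t : ℝ, (η t : ℂ) = ∫ ξ, g ξ * Complex.exp (Complex.I * (2 * Real.pi * ξ * t : ℝ)))
    (S : Finset ℤ) (a : ℤ → ℂ) (τ σ : ℝ) :
    (τ : ℂ) * ∑ m ∈ S, ((η ((m : ℝ) * τ) : ℂ) * a m) * Complex.exp (Complex.I * m * τ * σ) =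
      ∫ ξ, g ξ * ((τ : ℂ) * ∑ m ∈ S, a m *
        Complex.exp (Complex.I * m * τ * ((σ + 2 * Real.pi * ξ : ℝ) : ℂ))) := by
  have e : ∀ ξ : ℝ, g ξ * ((τ : ℂ) * ∑ m ∈ S, a m *
        Complex.exp (Complex.I * m * τ * ((σ + 2 * Real.pi * ξ : ℝ) : ℂ))) =
      ∑ m ∈ S, (g ξ * Complex.exp (Complex.I * (2 * Real.pi * ξ * ((m : ℝ) * τ) : ℝ))) *
        ((τ : ℂ) * a m * Complex.exp (Complex.I * m * τ * σ)) := by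
    intro ξ
    rw [Finset.mul_sum, Finset.mul_sum]
    refine Finset.sum_congr rfl fun m _ => ?_
    have : Complex.I * m * τ * ((σ + 2 * Real.pi * ξ : ℝ) : ℂ) =
        Complex.I * m * τ * σ + Complex.I * (2 * Real.pi * ξ * ((m : ℝ) * τ) : ℝ) := by
      push_cast; ring
    rw [this, Complex.exp_add]
    ring
  simp only [e]
  rw [integral_finsetSum]
  · rw [Finset.mul_sum]
    refine Finset.sum_congr rfl fun m _ => ?_
    rw [integral_mul_const, ← hg]
    ring
  · intro m _
    refine Integrable.mul_const ?_ _
    refine hgi.mono (hgi.aestronglyMeasurable.mul (Continuous.aestronglyMeasurable (by fun_prop)))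
      (ae_of_all _ fun ξ => ?_)
    rw [norm_mul, mul_comm Complex.I, Complex.norm_exp_ofReal_mul_I, mul_one]

lemma ofReal_tsum_le (f : ℤ → ℝ) (hf : ∀ k, 0 ≤ f k) :
    ENNReal.ofReal (∑' k, f k) ≤ ∑' k, ENNReal.ofReal (f k) := by
  by_cases h : Summable f
  · exact (ENNReal.ofReal_tsum_of_nonneg hf h).le
  · rw [tsum_eq_zero_of_not_summable h]
    simp

lemma ofReal_integral_le (f : ℝ → ℝ) (hf : ∀ k, 0 ≤ f k) (μ : Measure ℝ) :
    ENNReal.ofReal (∫ x, f x ∂μ) ≤ ∫⁻ x, ENNReal.ofReal (f x) ∂μ := by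
  by_cases h : Integrable f μ
  · exact (ofReal_integral_eq_lintegral_ofReal h (ae_of_all _ hf)).le
  · rw [integral_undef h]
    simp

/-- Uniform boundedness of multiplication by `η(nτ)` on `X^{s,b}_τ`. -/
theorem discrete_bourgain_time_cutoff (η : ℝ → ℝ) (hη : ContDiff ℝ (⊤ : ℕ∞) η)
    (hηc : HasCompactSupport η) (s b : ℝ) :
    ∃ C > (0 : ℝ), ∀ τ ∈ Set.Ioc (0 : ℝ) 1, ∀ u : ℤ → Torus → ℂ,
      (∀ n, InHs s (u n)) → {n : ℤ | u n ≠ 0}.Finite →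
      XdNorm τ s b (fun n x => (η ((n : ℝ) * τ) : ℂ) * u n x) ≤ C * XdNorm τ s b u := by
  obtain ⟨N, hN⟩ := exists_nat_ge |2 * b|
  obtain ⟨g, hgc, hgi, hgη, hgN⟩ := eta_fourier η hη hηc N
  set A : ℝ≥0∞ := (∫⁻ ξ, ‖g ξ‖ₑ) *
    (∫⁻ ξ, ‖g ξ‖ₑ * ENNReal.ofReal ((1 + |2 * Real.pi * ξ|) ^ N)) with hA
  have hAtop : A ≠ ⊤ := ENNReal.mul_ne_top hgi.2.ne hgN.ne
  refine ⟨Real.sqrt A.toReal + 1, by positivity, ?_⟩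
  rintro τ ⟨hτ, -⟩ u hu hfin
  set S := hfin.toFinset with hS
  have hS0 : ∀ m ∉ S, u m = 0 := fun m hm => by
    by_contra h
    exact hm (by simpa [hS] using h)
  have hc0 : ∀ m ∉ S, ∀ k, fourierCoeff (u m) k = 0 := fun m hm k => by
    rw [hS0 m hm]
    simp [fourierCoeff]
  set W : ℤ → ℝ → ℝ := fun k σ => jbr k ^ (2 * s) * jbr ‖dtau τ (σ - (k : ℝ) ^ 2)‖ ^ (2 * b) with hWdef
  set F : ℤ → ℝ → ℂ := fun k σ => (τ : ℂ) * ∑ m ∈ S, fourierCoeff (u m) k *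
    Complex.exp (Complex.I * m * τ * σ) with hFdef
  set G : ℤ → ℝ → ℂ := fun k σ => ∫ ξ, g ξ * F k (σ + 2 * Real.pi * ξ) with hGdef
  have hj0 : ∀ x, 0 < jbr x := fun x => lt_of_lt_of_le one_pos (jbr_one_le x)
  have hW0 : ∀ k σ, 0 ≤ W k σ := fun k σ =>
    mul_nonneg (Real.rpow_nonneg (hj0 _).le _) (Real.rpow_nonneg (hj0 _).le _)
  have hFt : ∀ k (σ : ℝ), (τ : ℂ) * ∑' m : ℤ, fourierCoeff (u m) k *
      Complex.exp (Complex.I * m * τ * σ) = F k σ := fun k σ => by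
    rw [tsum_eq_sum (s := S) (fun m hm => by rw [hc0 m hm, zero_mul])]
  have hGt : ∀ k (σ : ℝ), (τ : ℂ) * ∑' m : ℤ,
      fourierCoeff (fun x => (η ((m : ℝ) * τ) : ℂ) * u m x) k *
      Complex.exp (Complex.I * m * τ * σ) = G k σ := fun k σ => by
    simp only [fourierCoeff.const_mul]
    rw [tsum_eq_sum (s := S) (fun m hm => by rw [hc0 m hm, mul_zero, zero_mul])]
    exact conv_identity η g hgi hgη S _ τ σ
  have hFc : ∀ k, Continuous (F k) := fun k => by
    simp only [hFdef]
    fun_prop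
  have hWc : ∀ k, Continuous (W k) := fun k => by
    simp only [hWdef]
    refine continuous_const.mul (Continuous.rpow_const ?_ fun σ => Or.inl (hj0 _).ne')
    exact jbr_continuous.comp ((dtau_continuous τ).comp (by fun_prop)).norm
  have hT : 0 < 2 * Real.pi / τ := by positivity
  have hend : Real.pi / τ = -(Real.pi / τ) + 2 * Real.pi / τ := by ring
  have hWp : ∀ k x, W k (x + 2 * Real.pi / τ) = W k x := fun k x => by
    simp only [hWdef]
    rw [show x + 2 * Real.pi / τ - (k : ℝ) ^ 2 = (x - (k : ℝ) ^ 2) + 2 * Real.pi / τ by ring,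
      dtau_periodic τ hτ]
  have hFp : ∀ k x, F k (x + 2 * Real.pi / τ) = F k x := fun k x => by
    simp only [hFdef]
    congr 1
    refine Finset.sum_congr rfl fun m _ => ?_
    have : Complex.I * (m : ℂ) * (τ : ℂ) * ((x + 2 * Real.pi / τ : ℝ) : ℂ) =
        Complex.I * m * τ * x + m * (2 * Real.pi * Complex.I) := by
      have : (τ : ℂ) ≠ 0 := by exact_mod_cast hτ.ne'
      push_cast
      field_simp
    rw [this, Complex.exp_add, Complex.exp_int_mul_two_pi_mul_I, mul_one]
  have hWQ : ∀ k σ ξ, W k σ ≤ (1 + |2 * Real.pi * ξ|) ^ N * W k (σ + 2 * Real.pi * ξ) := by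
    intro k σ ξ
    have := jbr_rpow_peetre ‖dtau τ (σ - (k : ℝ) ^ 2)‖
      ‖dtau τ (σ - (k : ℝ) ^ 2 + 2 * Real.pi * ξ)‖ _ (2 * b) N hN (dtau_diff τ hτ _ _)
    have h2 := mul_le_mul_of_nonneg_left this (Real.rpow_nonneg (hj0 (k : ℝ)).le (2 * s))
    simp only [hWdef]
    rw [show σ + 2 * Real.pi * ξ - (k : ℝ) ^ 2 = σ - (k : ℝ) ^ 2 + 2 * Real.pi * ξ by ring]
    linarith
  have hcore : ∀ k, ∫⁻ σ in Set.Ioc (-(Real.pi / τ)) (Real.pi / τ),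
      ENNReal.ofReal (W k σ * ‖G k σ‖ ^ 2) ≤
      A * ∫⁻ σ in Set.Ioc (-(Real.pi / τ)) (Real.pi / τ), ENNReal.ofReal (W k σ * ‖F k σ‖ ^ 2) := by
    intro k
    have h := core g (F k) hgc (hFc k) (W k) (fun ξ => (1 + |2 * Real.pi * ξ|) ^ N) (hWc k) (hW0 k)
      (by fun_prop) (fun x => by positivity) (hWQ k) (-(Real.pi / τ)) (2 * Real.pi / τ) hT
      (hWp k) (hFp k)
    rw [← hend] at h
    exact h
  have hGc : ∀ k, Measurable fun σ => ENNReal.ofReal (W k σ * ‖G k σ‖ ^ 2) := fun k => by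
    have : StronglyMeasurable (G k) := by
      apply StronglyMeasurable.integral_prod_right'
        (f := fun p : ℝ × ℝ => g p.2 * F k (p.1 + 2 * Real.pi * p.2))
      apply Continuous.stronglyMeasurable
      have := hFc k
      fun_prop
    have h1 := this.measurable
    have h2 := (hWc k).measurable
    fun_prop
  have hFm : ∀ k, Measurable fun σ => ENNReal.ofReal (W k σ * ‖F k σ‖ ^ 2) := fun k => by
    have h1 := (hFc k).measurable
    have h2 := (hWc k).measurable
    fun_prop
  -- summability for the right-hand side
  have hB : ∃ M : ℤ → ℝ, Summable M ∧ ∀ k σ, W k σ * ‖F k σ‖ ^ 2 ≤ M k := by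
    refine ⟨fun k => (1 + 2 / τ) ^ N * (τ ^ 2 * S.card) *
      ∑ m ∈ S, jbr k ^ (2 * s) * ‖fourierCoeff (u m) k‖ ^ 2,
      (summable_sum fun m _ => (hu m).2).mul_left _, fun k σ => ?_⟩
    have h1 : jbr ‖dtau τ (σ - (k : ℝ) ^ 2)‖ ^ (2 * b) ≤ (1 + 2 / τ) ^ N := by
      have := jbr_rpow_peetre ‖dtau τ (σ - (k : ℝ) ^ 2)‖ 0 (2 / τ) (2 * b) N hN
        (by rw [sub_zero, abs_norm]; exact dtau_bound τ hτ _)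
      have j0 : jbr 0 = 1 := by simp [jbr]
      rwa [j0, Real.one_rpow, mul_one] at this
    have h2 : ‖F k σ‖ ≤ τ * ∑ m ∈ S, ‖fourierCoeff (u m) k‖ := by
      simp only [hFdef]
      rw [norm_mul, Complex.norm_real, Real.norm_of_nonneg hτ.le]
      gcongr
      refine (norm_sum_le _ _).trans (Finset.sum_le_sum fun m _ => ?_)
      have : Complex.I * (m : ℂ) * (τ : ℂ) * (σ : ℂ) = ((m * τ * σ : ℝ) : ℂ) * Complex.I := by
        push_cast; ring
      rw [norm_mul, this, Complex.norm_exp_ofReal_mul_I, mul_one]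
    have h3 : ‖F k σ‖ ^ 2 ≤ τ ^ 2 * (S.card * ∑ m ∈ S, ‖fourierCoeff (u m) k‖ ^ 2) := by
      refine (pow_le_pow_left₀ (norm_nonneg _) h2 2).trans ?_
      rw [mul_pow]
      gcongr
      exact sq_sum_le_card_mul_sum_sq
    have hk := Real.rpow_nonneg (hj0 (k : ℝ)).le (2 * s)
    calc W k σ * ‖F k σ‖ ^ 2 ≤ (jbr k ^ (2 * s) * (1 + 2 / τ) ^ N) *
          (τ ^ 2 * (S.card * ∑ m ∈ S, ‖fourierCoeff (u m) k‖ ^ 2)) := by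
          simp only [hWdef]
          gcongr
      _ = _ := by
          beta_reduce
          rw [← Finset.mul_sum]
          ring
  obtain ⟨M, hM, hMb⟩ := hB
  have hFn : ∀ k σ, 0 ≤ W k σ * ‖F k σ‖ ^ 2 := fun k σ => mul_nonneg (hW0 k σ) (by positivity)
  have hGn : ∀ k σ, 0 ≤ W k σ * ‖G k σ‖ ^ 2 := fun k σ => mul_nonneg (hW0 k σ) (by positivity)
  have hsum : ∀ σ, Summable fun k => W k σ * ‖F k σ‖ ^ 2 := fun σ =>
    Summable.of_nonneg_of_le (fun k => hFn k σ) (fun k => hMb k σ) hM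
  have hcont : Continuous fun σ => ∑' k, W k σ * ‖F k σ‖ ^ 2 := by
    refine continuous_tsum (fun k => (hWc k).mul ((hFc k).norm.pow 2)) hM fun k σ => ?_
    rw [Real.norm_of_nonneg (hFn k σ)]
    exact hMb k σ
  have hRHS : ∫⁻ σ in Set.Ioc (-(Real.pi / τ)) (Real.pi / τ),
      ∑' k, ENNReal.ofReal (W k σ * ‖F k σ‖ ^ 2) =
      ENNReal.ofReal (∫ σ in Set.Ioc (-(Real.pi / τ)) (Real.pi / τ), ∑' k, W k σ * ‖F k σ‖ ^ 2) := by
    rw [ofReal_integral_eq_lintegral_ofReal hcont.integrableOn_Ioc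
      (ae_of_all _ fun σ => tsum_nonneg fun k => hFn k σ)]
    refine lintegral_congr fun σ => ?_
    rw [ENNReal.ofReal_tsum_of_nonneg (fun k => hFn k σ) (hsum σ)]
  have hI0 : 0 ≤ ∫ σ in Set.Ioc (-(Real.pi / τ)) (Real.pi / τ), ∑' k, W k σ * ‖F k σ‖ ^ 2 :=
    integral_nonneg fun σ => tsum_nonneg fun k => hFn k σ
  have hmain : (∫ σ in Set.Ioc (-(Real.pi / τ)) (Real.pi / τ), ∑' k, W k σ * ‖G k σ‖ ^ 2) ≤
      A.toReal * ∫ σ in Set.Ioc (-(Real.pi / τ)) (Real.pi / τ), ∑' k, W k σ * ‖F k σ‖ ^ 2 := by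
    rw [← ENNReal.ofReal_le_ofReal_iff (mul_nonneg ENNReal.toReal_nonneg hI0),
      ENNReal.ofReal_mul ENNReal.toReal_nonneg, ENNReal.ofReal_toReal hAtop, ← hRHS]
    refine (ofReal_integral_le _ (fun σ => tsum_nonneg fun k => hGn k σ) _).trans ?_
    refine (lintegral_mono fun σ => ofReal_tsum_le _ fun k => hGn k σ).trans ?_
    rw [lintegral_tsum fun k => (hGc k).aemeasurable, lintegral_tsum fun k => (hFm k).aemeasurable,
      ← ENNReal.tsum_mul_left]
    exact ENNReal.tsum_le_tsum hcore
  unfold XdNorm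
  simp only [hFt, hGt]
  refine (Real.sqrt_le_sqrt hmain).trans ?_
  rw [Real.sqrt_mul ENNReal.toReal_nonneg]
  gcongr
  linarith
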